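/- Every Gallai 3-coloring of the edges of the complete graph K_n contains a 2-colored subgraph whose chromatic number is at least n^{2/3} (i.e., there exist two of the three colors such that the spanning subgraph consisting of all edges in those two colors has chromatic number at least n^{2/3}). -/

import Mathlib

/-!
Gallai's theorem: if three or more colors are available, then some color `i` spans a disconnected
graph, and by the Gallai condition the edges between two of its components all have the same color.
Hence the chromatic number of the graph of the edges not colored `i` is at least the sum of the
chromatic numbers it induces on the components. For three colors `i`, `j`, `k` the edges between two
components also lie together in the graph omitting `j` or in the one omitting `k`, so the product of
these two chromatic numbers is superadditive over the components as well. By Cauchy–Schwarz and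
induction, the three chromatic numbers multiply to at least `n ^ 2`, and the largest of them is at
least `n ^ (2 / 3)`.
-/

section Auxiliary

theorem sum_ncard_le_natCard {ι α : Type*} [Fintype ι] [Finite α] {A : ι → Set α}
    (hA : Pairwise (Function.onFun Disjoint A)) : ∑ e, (A e).ncard ≤ Nat.card α := by
  rw [← finsum_eq_sum_of_fintype, ← Set.ncard_iUnion_of_finite (fun e => (A e).toFinite) hA]
  exact Set.ncard_le_card _

theorem exists_le_pow_card_of_le_prod {K : Type*} [Fintype K] [Nonempty K] {m : ℕ} {f : K → ℕ}
    (h : m ≤ ∏ i, f i) : ∃ i, m ≤ f i ^ Fintype.card K := by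
  obtain ⟨i, hi⟩ := Finite.exists_max f
  exact ⟨i, h.trans (Finset.prod_le_pow_card Finset.univ f (f i) fun j _ => hi j)⟩

theorem rpow_div_le_of_pow_le_pow {x y : ℝ} (hx : 0 ≤ x) (hy : 0 ≤ y) {a b : ℕ} (hb : 0 < b)
    (h : x ^ a ≤ y ^ b) : x ^ ((a : ℝ) / b) ≤ y := by
  rw [div_eq_mul_inv, Real.rpow_mul hx, Real.rpow_natCast,
    Real.rpow_inv_le_iff_of_pos (by positivity) hy (by positivity), Real.rpow_natCast]
  exact h

end Auxiliary

section Graph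

variable {V ι : Type*} {G G₁ G₂ : SimpleGraph V}

theorem exists_reachable_induce_compl_singleton_and_adj (hG : G.Preconnected) {v : V}
    (x : ({v}ᶜ : Set V)) : ∃ w, (G.induce {v}ᶜ).Reachable x w ∧ G.Adj v w := by
  let S : Set V := Subtype.val '' {w | (G.induce {v}ᶜ).Reachable x w}
  have hxS : x.1 ∈ S := ⟨x, .refl x, rfl⟩
  have hvS : v ∉ S := by
    rintro ⟨w, -, hw⟩
    exact w.2 hw
  obtain ⟨p⟩ := hG x v
  obtain ⟨⟨⟨_, d⟩, hadj⟩, -, ⟨w, hxw, rfl⟩, hd⟩ := p.exists_boundary_dart S hxS hvS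
  obtain rfl | hdv := eq_or_ne d v
  · exact ⟨w, hxw, hadj.symm⟩
  · have hwd : (G.induce {v}ᶜ).Adj w ⟨d, hdv⟩ := hadj
    exact absurd ⟨⟨d, hdv⟩, hxw.trans hwd.reachable, rfl⟩ hd

theorem supp_ne_univ_of_not_preconnected (hG : ¬G.Preconnected) (e : G.ConnectedComponent) :
    e.supp ≠ Set.univ := by
  intro he
  refine hG fun x y => e.reachable_of_mem_supp ?_ ?_ <;> simp only [he, Set.mem_univ]

theorem natCard_sq_le_prod_chromaticNumber_of_subsingleton [Subsingleton V] [Fintype ι]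
    (H : ι → SimpleGraph V) : Nat.card V ^ 2 ≤ ∏ i, (H i).chromaticNumber.toNat := by
  cases isEmpty_or_nonempty V with
  | inl hV => simp
  | inr hV =>
    have hχ (i : ι) : (H i).chromaticNumber = 1 :=
      SimpleGraph.chromaticNumber_eq_one_iff.2 ⟨Subsingleton.elim _ _, hV⟩
    simp [hχ]

theorem toNat_chromaticNumber_induce_le_ncard_image {α : Type*} [Finite α] (C : G.Coloring α)
    (s : Set V) : (G.induce s).chromaticNumber.toNat ≤ (C '' s).ncard := by
  have := Fintype.ofFinite (C '' s)
  let D : (G.induce s).Coloring (C '' s) :=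
    .mk (fun x => ⟨C x, Set.mem_image_of_mem C x.2⟩)
      fun h hxy => C.valid h (congrArg Subtype.val hxy)
  rw [← Nat.card_coe_set_eq, Nat.card_eq_fintype_card]
  exact ENat.toNat_le_of_le_natCast D.colorable.chromaticNumber_le

theorem sum_chromaticNumber_induce_fiber_le [Finite V] [Fintype ι] (q : V → ι)
    (h : ∀ x y, q x ≠ q y → G.Adj x y) :
    ∑ e, (G.induce (q ⁻¹' {e})).chromaticNumber.toNat ≤ G.chromaticNumber.toNat := by
  obtain ⟨C⟩ := G.colorable_chromaticNumber_of_fintype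
  have hdisj : Pairwise (Function.onFun Disjoint fun e => C '' (q ⁻¹' {e})) := by
    refine fun e e' hee' => Set.disjoint_left.2 ?_
    rintro _ ⟨x, rfl, rfl⟩ ⟨y, rfl, hxy⟩
    exact C.valid (h x y hee') hxy.symm
  calc ∑ e, (G.induce (q ⁻¹' {e})).chromaticNumber.toNat
      ≤ ∑ e, (C '' (q ⁻¹' {e})).ncard :=
        Finset.sum_le_sum fun e _ => toNat_chromaticNumber_induce_le_ncard_image C _
    _ ≤ G.chromaticNumber.toNat := by simpa using sum_ncard_le_natCard hdisj

theorem sum_chromaticNumber_induce_fiber_mul_le [Finite V] [Fintype ι] (q : V → ι)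
    (h : ∀ e e', e ≠ e' → (∀ x ∈ q ⁻¹' {e}, ∀ y ∈ q ⁻¹' {e'}, G₁.Adj x y) ∨
      ∀ x ∈ q ⁻¹' {e}, ∀ y ∈ q ⁻¹' {e'}, G₂.Adj x y) :
    ∑ e, (G₁.induce (q ⁻¹' {e})).chromaticNumber.toNat *
        (G₂.induce (q ⁻¹' {e})).chromaticNumber.toNat ≤
      G₁.chromaticNumber.toNat * G₂.chromaticNumber.toNat := by
  obtain ⟨C₁⟩ := G₁.colorable_chromaticNumber_of_fintype
  obtain ⟨C₂⟩ := G₂.colorable_chromaticNumber_of_fintype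
  have hdisj : Pairwise (Function.onFun Disjoint fun e =>
      (C₁ '' (q ⁻¹' {e})) ×ˢ (C₂ '' (q ⁻¹' {e}))) := by
    refine fun e e' hee' => Set.disjoint_left.2 ?_
    rintro ⟨_, _⟩ ⟨⟨x₁, hx₁, rfl⟩, ⟨x₂, hx₂, rfl⟩⟩ ⟨⟨y₁, hy₁, hxy₁⟩, ⟨y₂, hy₂, hxy₂⟩⟩
    obtain hadj | hadj := h e e' hee'
    · exact C₁.valid (hadj x₁ hx₁ y₁ hy₁) hxy₁.symm
    · exact C₂.valid (hadj x₂ hx₂ y₂ hy₂) hxy₂.symm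
  calc ∑ e, (G₁.induce (q ⁻¹' {e})).chromaticNumber.toNat *
          (G₂.induce (q ⁻¹' {e})).chromaticNumber.toNat
      ≤ ∑ e, ((C₁ '' (q ⁻¹' {e})) ×ˢ (C₂ '' (q ⁻¹' {e}))).ncard := by
        simp only [Set.ncard_prod]
        gcongr <;> exact toNat_chromaticNumber_induce_le_ncard_image _ _
    _ ≤ G₁.chromaticNumber.toNat * G₂.chromaticNumber.toNat := by
        simpa using sum_ncard_le_natCard hdisj

end Graph

section Gallai

variable {V K : Type*}

/-- An edge coloring of the complete graph on `V` without rainbow triangles, given as a symmetric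
function on ordered pairs of vertices whose values on the diagonal are irrelevant. -/
structure IsGallaiColoring (c : V → V → K) : Prop where
  symm : ∀ u v, c u v = c v u
  not_rainbow : ∀ u v w, u ≠ v → v ≠ w → u ≠ w → ¬(c u v ≠ c v w ∧ c v w ≠ c u w ∧ c u v ≠ c u w)

/-- The graph `G_S` of the edges whose color lies in `S`. -/
def colorGraph (c : V → V → K) (S : Finset K) : SimpleGraph V :=
  SimpleGraph.fromRel fun u v => c u v ∈ S

/-- The edge coloring induced on a subset of the vertices. -/
def restrictColoring (c : V → V → K) (s : Set V) : s → s → K :=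
  fun x y => c x y

theorem colorGraph_restrictColoring (c : V → V → K) (s : Set V) (S : Finset K) :
    colorGraph (restrictColoring c s) S = (colorGraph c S).induce s := by
  ext x y
  simp [colorGraph, restrictColoring, Subtype.ext_iff]

namespace IsGallaiColoring

variable {c : V → V → K} {i : K} {x x' y y' : V}

theorem restrict (hc : IsGallaiColoring c) (s : Set V) :
    IsGallaiColoring (restrictColoring c s) where
  symm x y := hc.symm x y
  not_rainbow x y z hxy hyz hxz := hc.not_rainbow x y z
    (Subtype.coe_ne_coe.2 hxy) (Subtype.coe_ne_coe.2 hyz) (Subtype.coe_ne_coe.2 hxz)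

theorem colorGraph_adj (hc : IsGallaiColoring c) {S : Finset K} :
    (colorGraph c S).Adj x y ↔ x ≠ y ∧ c x y ∈ S := by
  simp [colorGraph, hc.symm y x]

theorem color_ne_of_not_reachable (hc : IsGallaiColoring c)
    (h : ¬(colorGraph c {i}).Reachable x y) : c x y ≠ i := by
  rintro rfl
  refine h (SimpleGraph.Adj.reachable (hc.colorGraph_adj.2 ⟨?_, by simp⟩))
  rintro rfl
  exact h .rfl

theorem color_eq_of_ne (hc : IsGallaiColoring c) {u v w : V} (huv : u ≠ v) (hvw : v ≠ w)
    (huw : u ≠ w) (hne : c u w ≠ c u v) (hne' : c v w ≠ c u v) : c u w = c v w := by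
  by_contra h
  exact hc.not_rainbow u v w huv hvw huw ⟨hne'.symm, Ne.symm h, hne.symm⟩

theorem color_eq_of_reachable_left (hc : IsGallaiColoring c)
    (hxx' : (colorGraph c {i}).Reachable x x') (hxy : ¬(colorGraph c {i}).Reachable x y) :
    c x y = c x' y := by
  obtain ⟨p⟩ := hxx'
  induction p with
  | nil => rfl
  | @cons u v _ huv _ ih =>
    have hvy : ¬(colorGraph c {i}).Reachable v y := fun h => hxy (huv.reachable.trans h)
    obtain ⟨hne, hcolor⟩ := hc.colorGraph_adj.1 huv
    rw [Finset.mem_singleton] at hcolor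
    rw [← ih hvy]
    refine hc.color_eq_of_ne hne ?_ ?_ ?_ ?_
    · exact fun h => hvy (h ▸ .rfl)
    · exact fun h => hxy (h ▸ .rfl)
    · exact hcolor ▸ hc.color_ne_of_not_reachable hxy
    · exact hcolor ▸ hc.color_ne_of_not_reachable hvy

theorem color_eq_of_reachable (hc : IsGallaiColoring c)
    (hxx' : (colorGraph c {i}).Reachable x x') (hyy' : (colorGraph c {i}).Reachable y y')
    (hxy : ¬(colorGraph c {i}).Reachable x y) : c x y = c x' y' := by
  have hyx' : ¬(colorGraph c {i}).Reachable y x' := fun h => hxy (hxx'.trans h.symm)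
  rw [hc.color_eq_of_reachable_left hxx' hxy, hc.symm,
    hc.color_eq_of_reachable_left hyy' hyx', hc.symm]

theorem exists_reachable_restrict_and_color_eq (hc : IsGallaiColoring c) {v : V}
    (hconn : (colorGraph c {i}).Preconnected) (x : ({v}ᶜ : Set V)) :
    ∃ w, (colorGraph (restrictColoring c {v}ᶜ) {i}).Reachable x w ∧ c v w = i := by
  rw [colorGraph_restrictColoring]
  obtain ⟨w, hxw, hvw⟩ := exists_reachable_induce_compl_singleton_and_adj hconn x
  exact ⟨w, hxw, Finset.mem_singleton.1 (hc.colorGraph_adj.1 hvw).2⟩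

theorem color_eq_of_not_reachable_restrict (hc : IsGallaiColoring c) {v : V}
    (hconn : (colorGraph c {i}).Preconnected) {x y : ({v}ᶜ : Set V)} (hx : c v x ≠ i)
    (hxy : ¬(colorGraph (restrictColoring c {v}ᶜ) {i}).Reachable x y) : c x y = c v x := by
  have hc' := hc.restrict {v}ᶜ
  obtain ⟨w, hyw, hvw⟩ := hc.exists_reachable_restrict_and_color_eq hconn y
  have hwx : ¬(colorGraph (restrictColoring c {v}ᶜ) {i}).Reachable w x :=
    fun h => hxy (hyw.trans h).symm
  have hwx_ne : (w : V) ≠ x := fun h => hwx (Subtype.ext h ▸ .rfl)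
  have hwx_color : c w x ≠ i := hc'.color_ne_of_not_reachable hwx
  calc c x y = c x w := hc'.color_eq_of_reachable .rfl hyw hxy
    _ = c w x := hc.symm _ _
    _ = c v x := (hc.color_eq_of_ne (Ne.symm w.2) hwx_ne (Ne.symm x.2)
        (hvw.symm ▸ hx) (hvw.symm ▸ hwx_color)).symm

theorem preconnected_compl_singleton [Fintype K] (hc : IsGallaiColoring c)
    (hK : 2 < Fintype.card K) (hconn : ∀ l, (colorGraph c {l}).Preconnected) (v : V) (i : K) :
    (colorGraph (restrictColoring c {v}ᶜ) {i}).Preconnected := by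
  classical
  intro a b
  by_contra hab
  set H := colorGraph (restrictColoring c {v}ᶜ) {i}
  obtain ⟨j, hj, k, hk, hjk⟩ : ∃ j ∈ ({i}ᶜ : Finset K), ∃ k ∈ ({i}ᶜ : Finset K), j ≠ k :=
    Finset.one_lt_card.1 (by rw [Finset.card_compl, Finset.card_singleton]; lia)
  rw [Finset.mem_compl, Finset.mem_singleton] at hj hk
  obtain ⟨x, -, rfl⟩ := hc.exists_reachable_restrict_and_color_eq (hconn j) a
  obtain ⟨x', -, rfl⟩ := hc.exists_reachable_restrict_and_color_eq (hconn k) a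
  apply hjk
  by_cases hxx' : H.Reachable x x'
  · obtain ⟨y, hxy⟩ : ∃ y, ¬H.Reachable x y := by
      by_contra! h
      exact hab ((h a).symm.trans (h b))
    have hx'y : ¬H.Reachable x' y := fun h => hxy (hxx'.trans h)
    calc c v x = c x y := (hc.color_eq_of_not_reachable_restrict (hconn i) hj hxy).symm
      _ = c x' y := (hc.restrict {v}ᶜ).color_eq_of_reachable_left hxx' hxy
      _ = c v x' := hc.color_eq_of_not_reachable_restrict (hconn i) hk hx'y
  · calc c v x = c x x' := (hc.color_eq_of_not_reachable_restrict (hconn i) hj hxx').symm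
      _ = c x' x := hc.symm _ _
      _ = c v x' := hc.color_eq_of_not_reachable_restrict (hconn i) hk fun h => hxx' h.symm

theorem exists_not_preconnected [Finite V] [Nontrivial V] [Fintype K] (hc : IsGallaiColoring c)
    (hK : 2 < Fintype.card K) : ∃ i, ¬(colorGraph c {i}).Preconnected := by
  induction hn : Nat.card V using Nat.strong_induction_on generalizing V with
  | _ n ih =>
    by_contra! hconn
    obtain ⟨v⟩ : Nonempty V := inferInstance
    have exists_color (l : K) : ∃ w : ({v}ᶜ : Set V), c v w = l := by
      obtain ⟨w, hw⟩ := (hconn l).exists_adj_of_nontrivial v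
      rw [hc.colorGraph_adj, Finset.mem_singleton] at hw
      exact ⟨⟨w, hw.1.symm⟩, hw.2⟩
    obtain ⟨j, k, hjk⟩ := Fintype.exists_pair_of_one_lt_card (by lia : 1 < Fintype.card K)
    obtain ⟨x, rfl⟩ := exists_color j
    obtain ⟨y, rfl⟩ := exists_color k
    have : Nontrivial ({v}ᶜ : Set V) := ⟨x, y, by rintro rfl; exact hjk rfl⟩
    have hcard : Nat.card ({v}ᶜ : Set V) < n := hn ▸ Finite.card_subtype_lt (x := v) (by simp)
    obtain ⟨i, hi⟩ := ih _ hcard (hc.restrict {v}ᶜ) rfl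
    exact hi (hc.preconnected_compl_singleton hK hconn v i)

theorem adj_compl_of_not_reachable [Fintype K] [DecidableEq K] (hc : IsGallaiColoring c)
    (hxy : ¬(colorGraph c {i}).Reachable x y) : (colorGraph c {i}ᶜ).Adj x y := by
  refine hc.colorGraph_adj.2 ⟨fun h => hxy (h ▸ .rfl), ?_⟩
  simpa using hc.color_ne_of_not_reachable hxy

theorem adj_compl_or_adj_compl [Fintype K] [DecidableEq K] (hc : IsGallaiColoring c) {j k : K}
    (hjk : j ≠ k) {e e' : (colorGraph c {i}).ConnectedComponent} (hee' : e ≠ e') :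
    (∀ x ∈ e.supp, ∀ y ∈ e'.supp, (colorGraph c {j}ᶜ).Adj x y) ∨
      ∀ x ∈ e.supp, ∀ y ∈ e'.supp, (colorGraph c {k}ᶜ).Adj x y := by
  obtain ⟨a, rfl⟩ := e.exists_rep
  obtain ⟨b, rfl⟩ := e'.exists_rep
  suffices adj_of_ne : ∀ l, c a b ≠ l → ∀ x ∈ ((colorGraph c {i}).connectedComponentMk a).supp,
      ∀ y ∈ ((colorGraph c {i}).connectedComponentMk b).supp, (colorGraph c {l}ᶜ).Adj x y by
    by_cases h : c a b = j
    · exact .inr (adj_of_ne k (h ▸ hjk))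
    · exact .inl (adj_of_ne j h)
  intro l hl x hx y hy
  have hab : ¬(colorGraph c {i}).Reachable a b :=
    fun h => hee' (SimpleGraph.ConnectedComponent.sound h)
  have hxa := SimpleGraph.ConnectedComponent.exact hx
  have hyb := SimpleGraph.ConnectedComponent.exact hy
  rw [hc.color_eq_of_reachable hxa.symm hyb.symm hab] at hl
  refine hc.colorGraph_adj.2 ⟨?_, by simpa using hl⟩
  rintro rfl
  exact hab (hxa.symm.trans hyb)

theorem natCard_sq_le_prod_of_components [Finite V] [Fintype K] [DecidableEq K]
    (hc : IsGallaiColoring c) (hK : Fintype.card K = 3) (i : K)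
    (h : ∀ e : (colorGraph c {i}).ConnectedComponent, Nat.card e.supp ^ 2 ≤
      ∏ l, ((colorGraph c {l}ᶜ).induce e.supp).chromaticNumber.toNat) :
    Nat.card V ^ 2 ≤ ∏ l, (colorGraph c {l}ᶜ).chromaticNumber.toNat := by
  let q := (colorGraph c {i}).connectedComponentMk
  let χ (l : K) := (colorGraph c {l}ᶜ).chromaticNumber.toNat
  let χ' (l : K) (e : (colorGraph c {i}).ConnectedComponent) :=
    ((colorGraph c {l}ᶜ).induce e.supp).chromaticNumber.toNat
  have := Fintype.ofFinite (colorGraph c {i}).ConnectedComponent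
  obtain ⟨j, k, hjk, hijk⟩ : ∃ j k, j ≠ k ∧ ({i}ᶜ : Finset K) = {j, k} :=
    Finset.card_eq_two.1 (by rw [Finset.card_compl, Finset.card_singleton, hK])
  have prod_eq (f : K → ℕ) : ∏ l, f l = f i * (f j * f k) := by
    rw [Fintype.prod_eq_mul_prod_compl i, hijk, Finset.prod_pair hjk]
  have hi : ∑ e, χ' i e ≤ χ i :=
    sum_chromaticNumber_induce_fiber_le q fun x y hxy =>
      hc.adj_compl_of_not_reachable fun h => hxy (SimpleGraph.ConnectedComponent.sound h)
  have hjk' : ∑ e, χ' j e * χ' k e ≤ χ j * χ k :=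
    sum_chromaticNumber_induce_fiber_mul_le q fun _ _ => hc.adj_compl_or_adj_compl hjk
  have hcard : Nat.card V = ∑ e : (colorGraph c {i}).ConnectedComponent, Nat.card e.supp := by
    rw [← Nat.card_sigma]
    exact Nat.card_congr (Equiv.sigmaFiberEquiv q).symm
  calc Nat.card V ^ 2 = (∑ e : (colorGraph c {i}).ConnectedComponent, Nat.card e.supp) ^ 2 := by
        rw [hcard]
    _ ≤ (∑ e, χ' i e) * ∑ e, χ' j e * χ' k e :=
        Finset.sum_sq_le_sum_mul_sum_of_sq_le_mul _ (fun _ _ => Nat.zero_le _)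
          (fun _ _ => Nat.zero_le _) fun e _ => (h e).trans_eq (prod_eq _)
    _ ≤ χ i * (χ j * χ k) := Nat.mul_le_mul hi hjk'
    _ = ∏ l, χ l := (prod_eq χ).symm

theorem natCard_sq_le_prod_chromaticNumber [Finite V] [Fintype K] [DecidableEq K]
    (hc : IsGallaiColoring c) (hK : Fintype.card K = 3) :
    Nat.card V ^ 2 ≤ ∏ i, (colorGraph c {i}ᶜ).chromaticNumber.toNat := by
  induction hn : Nat.card V using Nat.strong_induction_on generalizing V with
  | _ n ih =>
    obtain hV | hV := subsingleton_or_nontrivial V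
    · rw [← hn]
      exact natCard_sq_le_prod_chromaticNumber_of_subsingleton _
    obtain ⟨i, hi⟩ := hc.exists_not_preconnected (by lia)
    rw [← hn]
    refine hc.natCard_sq_le_prod_of_components hK i fun e => ?_
    have hcard : Nat.card e.supp < n :=
      hn ▸ Set.ncard_lt_card (supp_ne_univ_of_not_preconnected hi e)
    simpa only [colorGraph_restrictColoring] using ih _ hcard (hc.restrict e.supp) rfl

end IsGallaiColoring

end Gallai

theorem stmt_0_general {V K : Type*} [Fintype V] [Fintype K] {c : V → V → K}
    (hc : IsGallaiColoring c) (hK : Fintype.card K = 3) :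
    ∃ S : Finset K, S.card = 2 ∧
      (Fintype.card V : ℝ) ^ ((2 : ℝ) / 3) ≤ ((colorGraph c S).chromaticNumber.toNat : ℝ) := by
  classical
  have : Nonempty K := Fintype.card_pos_iff.1 (by lia)
  obtain ⟨i, hi⟩ := exists_le_pow_card_of_le_prod (hc.natCard_sq_le_prod_chromaticNumber hK)
  refine ⟨{i}ᶜ, by rw [Finset.card_compl, Finset.card_singleton, hK], ?_⟩
  rw [Nat.card_eq_fintype_card, hK] at hi
  exact rpow_div_le_of_pow_le_pow (by positivity) (by positivity) three_pos (by exact_mod_cast hi)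

/-- Every Gallai 3-coloring of the edges of `K_n` contains a 2-colored subgraph
whose chromatic number is at least `n^(2/3)`. The coloring is given as a symmetric
function `c` on ordered pairs of vertices; the Gallai condition says that no three
distinct vertices span a rainbow triangle. For a set `S` of colors, the subgraph
`G_S` consists of the edges whose color lies in `S`. -/
theorem stmt_0 (n : ℕ) (c : Fin n → Fin n → Fin 3)
    (hsym : ∀ u v, c u v = c v u)
    (hGallai : ∀ u v w : Fin n, u ≠ v → v ≠ w → u ≠ w →
      ¬(c u v ≠ c v w ∧ c v w ≠ c u w ∧ c u v ≠ c u w)) :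
    ∃ S : Finset (Fin 3), S.card = 2 ∧
      (n : ℝ) ^ ((2 : ℝ) / 3) ≤
        (((SimpleGraph.fromRel fun u v => c u v ∈ S).chromaticNumber).toNat : ℝ) := by
  simpa only [Fintype.card_fin, colorGraph] using
    stmt_0_general ⟨hsym, hGallai⟩ (Fintype.card_fin 3)
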